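/- Let n ≥ 2, let V : ℝⁿ → ℝ be a C² function satisfying the flat kernel equation ∂_i ∂_j V = (∑_k ∂_k ∂_k V) δ_{ij} at every point and for all i, j, and let ζ : ℝⁿ → ℝⁿ be a C² vector field. Define W_{ij} = V (∂_i ζ_j − ∂_j ζ_i) + 2(ζ_i ∂_j V − ζ_j ∂_i V). Then W is antisymmetric (W_{ij} = −W_{ji}) and for every index j, 𝕌(V, L_ζδ)_j = ∑_i ∂_i W_{ij}. -/

import Mathlib

/-!
Both sides are expanded by the Leibniz rule. Using `∂_i ∂_j ζ_i = ∂_j ∂_i ζ_i` (the components of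
`ζ` are `C²`), the `i`-th term of the difference between `∑_i ∂_i W_{ij}` and `𝕌(V, L_ζ δ)_j`
is `2 ζ_i ∂_i ∂_j V - 2 ζ_j ∂_i ∂_i V`, everything else cancelling termwise. The kernel
equation turns `∑_i ζ_i ∂_i ∂_j V` into `ζ_j ∑_k ∂_k ∂_k V`, so these terms sum to zero.
-/

/-- The `i`-th partial derivative of a real-valued function on Euclidean space. -/
noncomputable def pd {n : ℕ} (i : Fin n) (f : EuclideanSpace ℝ (Fin n) → ℝ)
    (x : EuclideanSpace ℝ (Fin n)) : ℝ :=
  fderiv ℝ f x (EuclideanSpace.single i 1)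

/-- The Lie derivative of the flat metric along `ζ`: `(L_ζ δ)_{ij} = ∂_i ζ_j + ∂_j ζ_i`. -/
noncomputable def lieFlat {n : ℕ} (ζ : EuclideanSpace ℝ (Fin n) → EuclideanSpace ℝ (Fin n))
    (x : EuclideanSpace ℝ (Fin n)) (i j : Fin n) : ℝ :=
  pd i (fun y => ζ y j) x + pd j (fun y => ζ y i) x

/-- The charge integrand `𝕌(V,e)_j = V(∑_i ∂_i e_{ij} − ∂_j ∑_i e_{ii})
    − ∑_i (∂_i V) e_{ij} + (∑_i e_{ii}) ∂_j V`. -/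
noncomputable def chargeU {n : ℕ} (V : EuclideanSpace ℝ (Fin n) → ℝ)
    (e : EuclideanSpace ℝ (Fin n) → Fin n → Fin n → ℝ) (j : Fin n)
    (x : EuclideanSpace ℝ (Fin n)) : ℝ :=
  V x * ((∑ i, pd i (fun y => e y i j) x) - pd j (fun y => ∑ i, e y i i) x)
    - (∑ i, pd i V x * e x i j) + (∑ i, e x i i) * pd j V x

section PartialDerivatives

variable {n : ℕ} {f g : EuclideanSpace ℝ (Fin n) → ℝ} {x : EuclideanSpace ℝ (Fin n)}

lemma pd_add (i : Fin n) (hf : DifferentiableAt ℝ f x) (hg : DifferentiableAt ℝ g x) :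
    pd i (fun y => f y + g y) x = pd i f x + pd i g x := by
  simp [pd, fderiv_fun_add hf hg]

lemma pd_sub (i : Fin n) (hf : DifferentiableAt ℝ f x) (hg : DifferentiableAt ℝ g x) :
    pd i (fun y => f y - g y) x = pd i f x - pd i g x := by
  simp [pd, fderiv_fun_sub hf hg]

lemma pd_mul (i : Fin n) (hf : DifferentiableAt ℝ f x) (hg : DifferentiableAt ℝ g x) :
    pd i (fun y => f y * g y) x = f x * pd i g x + pd i f x * g x := by
  simp [pd, fderiv_fun_mul hf hg, mul_comm]

lemma pd_const_mul (i : Fin n) (c : ℝ) (hf : DifferentiableAt ℝ f x) :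
    pd i (fun y => c * f y) x = c * pd i f x := by
  simp [pd, fderiv_const_mul hf]

lemma pd_sum (i : Fin n) {F : Fin n → EuclideanSpace ℝ (Fin n) → ℝ}
    (hF : ∀ k, DifferentiableAt ℝ (F k) x) :
    pd i (fun y => ∑ k, F k y) x = ∑ k, pd i (F k) x := by
  simp [pd, fderiv_fun_sum fun k _ => hF k]

lemma differentiable_pd (hf : ContDiff ℝ 2 f) (i : Fin n) : Differentiable ℝ (pd i f) :=
  ((hf.fderiv_right (m := 1) (by norm_num)).differentiable (by norm_num)).clm_apply
    (differentiable_const _)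

lemma pd_comm (hf : ContDiff ℝ 2 f) (i j : Fin n) (x : EuclideanSpace ℝ (Fin n)) :
    pd i (pd j f) x = pd j (pd i f) x := by
  have hd : DifferentiableAt ℝ (fderiv ℝ f) x :=
    (hf.fderiv_right (m := 1) (by norm_num)).differentiable (by norm_num) x
  have key : ∀ a b : Fin n, pd a (pd b f) x =
      fderiv ℝ (fderiv ℝ f) x (EuclideanSpace.single a 1) (EuclideanSpace.single b 1) := by
    intro a b
    change fderiv ℝ (fun y => fderiv ℝ f y (EuclideanSpace.single b 1)) x _ = _
    rw [fderiv_clm_apply hd (differentiableAt_const _)]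
    simp
  rw [key, key]
  exact (hf.contDiffAt.isSymmSndFDerivAt (by simp)).eq _ _

end PartialDerivatives

/-- flat Cancellation Lemma with explicit antisymmetric potential:
for `n ≥ 2`, a `C²` function `V` with `∂_i ∂_j V = (∑_k ∂_k ∂_k V) δ_{ij}` and a `C²`
vector field `ζ`, the field `W_{ij} = V (∂_i ζ_j − ∂_j ζ_i) + 2(ζ_i ∂_j V − ζ_j ∂_i V)`
is antisymmetric and `𝕌(V, L_ζδ)_j = ∑_i ∂_i W_{ij}`. -/
theorem cancellation_lemma_flat
    (n : ℕ) (hn : 2 ≤ n)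
    (V : EuclideanSpace ℝ (Fin n) → ℝ)
    (hV : ContDiff ℝ 2 V)
    (hker : ∀ x i j, pd i (pd j V) x
      = (∑ k, pd k (pd k V) x) * (if i = j then (1:ℝ) else 0))
    (ζ : EuclideanSpace ℝ (Fin n) → EuclideanSpace ℝ (Fin n))
    (hζ : ContDiff ℝ 2 ζ)
    (W : EuclideanSpace ℝ (Fin n) → Fin n → Fin n → ℝ)
    (hW : ∀ x i j, W x i j =
      V x * (pd i (fun z => ζ z j) x - pd j (fun z => ζ z i) x)
        + 2 * (ζ x i * pd j V x - ζ x j * pd i V x)) :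
    (∀ x i j, W x i j = - W x j i) ∧
    (∀ j x, chargeU V (fun y => lieFlat ζ y) j x = ∑ i, pd i (fun y => W y i j) x) := by
  refine ⟨fun x i j => by rw [hW, hW]; ring, fun j x => ?_⟩
  have hc : ∀ k, ContDiff ℝ 2 (fun z => ζ z k) := fun k => contDiff_euclidean.1 hζ k
  have dc : ∀ k, DifferentiableAt ℝ (fun z => ζ z k) x := fun k =>
    (hc k).differentiable two_ne_zero x
  have dp : ∀ i k, DifferentiableAt ℝ (pd i (fun z => ζ z k)) x := fun i k =>
    differentiable_pd (hc k) i x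
  have dV : DifferentiableAt ℝ V x := hV.differentiable (by norm_num) x
  have dpV : ∀ i, DifferentiableAt ℝ (pd i V) x := fun i => differentiable_pd hV i x
  have hWd : ∀ i, pd i (fun y => W y i j) x =
      V x * (pd i (pd i (fun z => ζ z j)) x - pd i (pd j (fun z => ζ z i)) x)
      + pd i V x * (pd i (fun z => ζ z j) x - pd j (fun z => ζ z i) x)
      + 2 * ((ζ x i * pd i (pd j V) x + pd i (fun z => ζ z i) x * pd j V x)
        - (ζ x j * pd i (pd i V) x + pd i (fun z => ζ z j) x * pd i V x)) := by
    intro i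
    simp only [hW]
    rw [pd_add i (dV.fun_mul ((dp i j).fun_sub (dp j i)))
        ((((dc i).fun_mul (dpV j)).fun_sub ((dc j).fun_mul (dpV i))).const_mul 2),
      pd_mul i dV ((dp i j).fun_sub (dp j i)), pd_sub i (dp i j) (dp j i),
      pd_const_mul i 2 (((dc i).fun_mul (dpV j)).fun_sub ((dc j).fun_mul (dpV i))),
      pd_sub i ((dc i).fun_mul (dpV j)) ((dc j).fun_mul (dpV i)),
      pd_mul i (dc i) (dpV j), pd_mul i (dc j) (dpV i)]
  have hdiv : ∀ i, pd i (fun y => lieFlat ζ y i j) x =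
      pd i (pd i (fun z => ζ z j)) x + pd i (pd j (fun z => ζ z i)) x := fun i =>
    pd_add i (dp i j) (dp j i)
  have htr : pd j (fun y => ∑ i, lieFlat ζ y i i) x =
      ∑ i, 2 * pd i (pd j (fun z => ζ z i)) x := by
    rw [pd_sum j (F := fun i y => lieFlat ζ y i i) fun i => (dp i i).fun_add (dp i i)]
    refine Finset.sum_congr rfl fun i _ => ?_
    rw [pd_comm (hc i) i j, two_mul]
    exact pd_add j (dp i i) (dp i i)
  have hcancel : ∑ i, (ζ x i * pd i (pd j V) x - ζ x j * pd i (pd i V) x) = 0 := by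
    rw [Finset.sum_sub_distrib, ← Finset.mul_sum]
    have h : ∀ i, ζ x i * pd i (pd j V) x =
        if i = j then ζ x i * ∑ k, pd k (pd k V) x else 0 := by
      intro i
      rw [hker x i j]
      split_ifs <;> simp
    simp [h]
  rw [← sub_eq_zero]
  simp only [chargeU, hdiv, htr, hWd]
  simp only [lieFlat]
  rw [← Finset.sum_sub_distrib, Finset.mul_sum, Finset.sum_mul, ← Finset.sum_sub_distrib,
    ← Finset.sum_add_distrib, ← Finset.sum_sub_distrib]
  rw [← mul_zero (-2 : ℝ), ← hcancel, Finset.mul_sum]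
  refine Finset.sum_congr rfl fun i _ => ?_
  ring
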